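/- Let U ⊆ ℝ³ be open and let e be a nowhere-vanishing smooth vector field on U with values in the contact distribution C (i.e., ω(e) = 0), spanning a one-dimensional subdistribution E ⊆ C. Let A, B : U → ℝ be smooth first integrals of E (dA(e) = 0 and dB(e) = 0) with dA ∧ dB nowhere zero, and suppose A_x + z·A_y ≠ 0 on U. Then the map φ(x,y,z) = (A, B, (B_x + z B_y)/(A_x + z A_y)) is a contact map (its differential maps C into C), and its differential maps E into the vertical distribution V = span{∂/∂z}. -/

import Mathlib

noncomputable section

/-- The 1-jet space `J¹(ℝ,ℝ) = ℝ³` with coordinates `(x, y, z)`. -/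
abbrev R3 : Type := ℝ × ℝ × ℝ

/-- Partial derivative in `x` of a function on `ℝ³`. -/
noncomputable def px (f : R3 → ℝ) (p : R3) : ℝ := fderiv ℝ f p (1, 0, 0)

/-- Partial derivative in `y` of a function on `ℝ³`. -/
noncomputable def py (f : R3 → ℝ) (p : R3) : ℝ := fderiv ℝ f p (0, 1, 0)

/-- The contact form `ω = dy − z dx` at `p` on the vector `v`: `ω_p(v) = v² − z·v¹`. -/
def omv (p v : R3) : ℝ := v.2.1 - p.2.2 * v.1

/-- The map `φ(x,y,z) = (A, B, (B_x + z B_y)/(A_x + z A_y))` built from two first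
integrals `A, B` of a one-dimensional subdistribution of the contact distribution. -/
noncomputable def rectifyMap (A B : R3 → ℝ) : R3 → R3 := fun p =>
  (A p, B p, (px B p + p.2.2 * py B p) / (px A p + p.2.2 * py A p))

/-!
On the two-dimensional contact plane `C_p` the functionals `dA` and `dB` both kill the nonzero
vector `e`, so they are proportional there. Comparing them on `∂/∂x + z ∂/∂y ∈ C_p` identifies the
factor: `dB = λ dA` on `C_p`, where `λ` is the third component of `φ`. Since `φ` pulls `ω` back to
`dB - λ dA`, it is a contact map; and `dφ(e)` is vertical because its first two components are
`dA(e)` and `dB(e)`.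
-/

section Dual

variable {K V : Type*} [Field K] [AddCommGroup V] [Module K V]

theorem dual_apply_mul_comm_of_finrank_eq_two (hV : Module.finrank K V = 2) {e : V} (he : e ≠ 0)
    {f g : Module.Dual K V} (hf : f e = 0) (hg : g e = 0) (v w : V) :
    f v * g w = f w * g v := by
  rcases eq_or_ne f 0 with rfl | hf₀
  · simp
  have : FiniteDimensional K V := .of_finrank_pos (by omega)
  have h_ker : Module.finrank K (LinearMap.ker f) = 1 := by
    have := Module.Dual.finrank_ker_add_one_of_ne_zero hf₀
    omega
  have h_mem : f v • w - f w • v ∈ LinearMap.ker f := by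
    simp [mul_comm]
  obtain ⟨c, hc⟩ : ∃ c : K, c • e = f v • w - f w • v := by
    have he' : (⟨e, hf⟩ : LinearMap.ker f) ≠ 0 := fun h ↦ he (congrArg Subtype.val h)
    obtain ⟨c, hc⟩ := (finrank_eq_one_iff_of_nonzero' _ he').1 h_ker ⟨_, h_mem⟩
    exact ⟨c, congrArg Subtype.val hc⟩
  have h_g : f v * g w - f w * g v = 0 := by
    simpa [hg] using (congrArg g hc).symm
  exact sub_eq_zero.1 h_g

end Dual

/-- The contact form `ω_p` as a linear functional; its value at `v` is `omv p v`. -/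
def contactForm (p : R3) : Module.Dual ℝ R3 :=
  LinearMap.fst ℝ ℝ ℝ ∘ₗ LinearMap.snd ℝ ℝ (ℝ × ℝ) - p.2.2 • LinearMap.fst ℝ ℝ (ℝ × ℝ)

/-- The contact plane `C_p`, the fibre at `p` of the contact distribution. -/
def contactPlane (p : R3) : Submodule ℝ R3 :=
  LinearMap.ker (contactForm p)

theorem mem_contactPlane {p v : R3} : v ∈ contactPlane p ↔ omv p v = 0 :=
  Iff.rfl

theorem finrank_contactPlane (p : R3) : Module.finrank ℝ (contactPlane p) = 2 := by
  have h_ne : contactForm p ≠ 0 := fun h ↦ by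
    simpa [contactForm] using LinearMap.congr_fun h (0, 1, 0)
  have h_ker : Module.finrank ℝ (contactPlane p) + 1 = Module.finrank ℝ R3 :=
    Module.Dual.finrank_ker_add_one_of_ne_zero h_ne
  have h_dim : Module.finrank ℝ R3 = 3 := by simp
  omega

theorem dual_apply_mul_comm_of_mem_contactPlane {p e v w : R3} (he : e ≠ 0)
    (heC : e ∈ contactPlane p) (hv : v ∈ contactPlane p) (hw : w ∈ contactPlane p)
    {f g : Module.Dual ℝ R3} (hf : f e = 0) (hg : g e = 0) : f v * g w = f w * g v :=
  have he' : (⟨e, heC⟩ : contactPlane p) ≠ 0 := fun h ↦ he (congrArg Subtype.val h)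
  dual_apply_mul_comm_of_finrank_eq_two (finrank_contactPlane p) he'
    (f := f.domRestrict (contactPlane p)) (g := g.domRestrict (contactPlane p)) hf hg
    ⟨v, hv⟩ ⟨w, hw⟩

/-- The contact vector `∂/∂x + z ∂/∂y` at `p`. Differentiating along it gives the total
derivative `f_x + z f_y` occurring in `rectifyMap`. -/
def totalVector (p : R3) : R3 := (1, p.2.2, 0)

theorem totalVector_mem_contactPlane (p : R3) : totalVector p ∈ contactPlane p := by
  simp [mem_contactPlane, omv, totalVector]

theorem fderiv_totalVector (f : R3 → ℝ) (p : R3) :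
    fderiv ℝ f p (totalVector p) = px f p + p.2.2 * py f p := by
  have h : totalVector p = (1, 0, 0) + p.2.2 • ((0, 1, 0) : R3) := by simp [totalVector]
  rw [h, map_add, map_smul, smul_eq_mul, px, py]

theorem differentiableAt_px_add_mul_py {f : R3 → ℝ} {p : R3} (hf : ContDiffAt ℝ 2 f p) :
    DifferentiableAt ℝ (fun q : R3 ↦ px f q + q.2.2 * py f q) p := by
  have h_fderiv : DifferentiableAt ℝ (fderiv ℝ f) p :=
    (hf.fderiv_right (m := 1) (by norm_num)).differentiableAt one_ne_zero
  unfold px py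
  fun_prop

section RectifyMap

variable {A B : R3 → ℝ} {p : R3}

theorem differentiableAt_rectifyMap (hA : ContDiffAt ℝ 2 A p) (hB : ContDiffAt ℝ 2 B p)
    (hden : px A p + p.2.2 * py A p ≠ 0) : DifferentiableAt ℝ (rectifyMap A B) p :=
  have h_num := differentiableAt_px_add_mul_py hB
  have h_den := differentiableAt_px_add_mul_py hA
  (hA.differentiableAt two_ne_zero).prodMk
    ((hB.differentiableAt two_ne_zero).prodMk (h_num.fun_mul (h_den.fun_inv hden)))

theorem fderiv_rectifyMap_fst (h : DifferentiableAt ℝ (rectifyMap A B) p) (v : R3) :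
    (fderiv ℝ (rectifyMap A B) p v).1 = fderiv ℝ A p v := by
  have hA : HasFDerivAt A _ p := h.hasFDerivAt.fst
  rw [hA.fderiv]
  rfl

theorem fderiv_rectifyMap_snd_fst (h : DifferentiableAt ℝ (rectifyMap A B) p) (v : R3) :
    (fderiv ℝ (rectifyMap A B) p v).2.1 = fderiv ℝ B p v := by
  have hB : HasFDerivAt B _ p := h.hasFDerivAt.snd.fst
  rw [hB.fderiv]
  rfl

theorem omv_fderiv_rectifyMap (h : DifferentiableAt ℝ (rectifyMap A B) p) (v : R3) :
    omv (rectifyMap A B p) (fderiv ℝ (rectifyMap A B) p v) =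
      fderiv ℝ B p v -
        fderiv ℝ B p (totalVector p) / fderiv ℝ A p (totalVector p) * fderiv ℝ A p v := by
  rw [omv, fderiv_rectifyMap_fst h, fderiv_rectifyMap_snd_fst h, fderiv_totalVector,
    fderiv_totalVector, rectifyMap]

theorem stmt7_general {e : R3} (he : e ≠ 0) (heC : omv p e = 0)
    (hA : ContDiffAt ℝ 2 A p) (hB : ContDiffAt ℝ 2 B p)
    (hAe : fderiv ℝ A p e = 0) (hBe : fderiv ℝ B p e = 0)
    (hden : px A p + p.2.2 * py A p ≠ 0) :
    DifferentiableAt ℝ (rectifyMap A B) p ∧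
      (∀ v : R3, omv p v = 0 →
        omv (rectifyMap A B p) (fderiv ℝ (rectifyMap A B) p v) = 0) ∧
      (fderiv ℝ (rectifyMap A B) p e).1 = 0 ∧ (fderiv ℝ (rectifyMap A B) p e).2.1 = 0 := by
  have h_diff := differentiableAt_rectifyMap hA hB hden
  refine ⟨h_diff, fun v hv ↦ ?_, (fderiv_rectifyMap_fst h_diff e).trans hAe,
    (fderiv_rectifyMap_snd_fst h_diff e).trans hBe⟩
  have h_prop : fderiv ℝ A p v * fderiv ℝ B p (totalVector p) =
      fderiv ℝ A p (totalVector p) * fderiv ℝ B p v :=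
    dual_apply_mul_comm_of_mem_contactPlane he (mem_contactPlane.2 heC) (mem_contactPlane.2 hv)
      (totalVector_mem_contactPlane p) (f := (fderiv ℝ A p).toLinearMap)
      (g := (fderiv ℝ B p).toLinearMap) hAe hBe
  rw [← fderiv_totalVector] at hden
  rw [omv_fderiv_rectifyMap h_diff, sub_eq_zero, div_mul_eq_mul_div, eq_div_iff hden]
  linear_combination -h_prop

end RectifyMap

/-- Let `e` be a nowhere-vanishing smooth vector field on an open
`U ⊆ ℝ³` with values in the contact distribution, spanning a subdistribution `E ⊆ C`,
and let `A, B` be smooth first integrals of `E` with `dA ∧ dB ≠ 0` and `A_x + z A_y ≠ 0`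
on `U`.  Then `φ = (A, B, (B_x + z B_y)/(A_x + z A_y))` is a contact map (its
differential maps `C` into `C`) whose differential maps `E` into the vertical
distribution `V = span{∂/∂z}`. -/
theorem stmt7 (U : Set R3) (hU : IsOpen U) (e : R3 → R3)
    (he : ContDiffOn ℝ (⊤ : ℕ∞) e U)
    (hne : ∀ p ∈ U, e p ≠ 0)
    (heC : ∀ p ∈ U, omv p (e p) = 0)
    (A B : R3 → ℝ)
    (hA : ContDiffOn ℝ (⊤ : ℕ∞) A U) (hB : ContDiffOn ℝ (⊤ : ℕ∞) B U)
    (hAe : ∀ p ∈ U, fderiv ℝ A p (e p) = 0)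
    (hBe : ∀ p ∈ U, fderiv ℝ B p (e p) = 0)
    (hind : ∀ p ∈ U, ∃ v w : R3,
      fderiv ℝ A p v * fderiv ℝ B p w - fderiv ℝ A p w * fderiv ℝ B p v ≠ 0)
    (hden : ∀ p ∈ U, px A p + p.2.2 * py A p ≠ 0) :
    (∀ p ∈ U, ∀ v : R3, omv p v = 0 →
      omv (rectifyMap A B p) (fderiv ℝ (rectifyMap A B) p v) = 0) ∧
    (∀ p ∈ U, (fderiv ℝ (rectifyMap A B) p (e p)).1 = 0 ∧
      (fderiv ℝ (rectifyMap A B) p (e p)).2.1 = 0) := by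
  have h_contDiffAt (f : R3 → ℝ) (hf : ContDiffOn ℝ (⊤ : ℕ∞) f U) (p : R3) (hp : p ∈ U) :
      ContDiffAt ℝ 2 f p :=
    (hf.contDiffAt (hU.mem_nhds hp)).of_le (WithTop.coe_le_coe.2 le_top)
  have h_general (p : R3) (hp : p ∈ U) :=
    stmt7_general (hne p hp) (heC p hp) (h_contDiffAt A hA p hp)
      (h_contDiffAt B hB p hp) (hAe p hp) (hBe p hp) (hden p hp)
  exact ⟨fun p hp ↦ (h_general p hp).2.1, fun p hp ↦ (h_general p hp).2.2⟩
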